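/- Let p be a prime, r ≥ 2 an integer, and K a totally real abelian number field of conductor p^r, of degree n over ℚ and with D_K the absolute value of the discriminant of K. Then the Euclidean minimum of K satisfies M(K) ≤ 2^{-n} · √(D_K). -/

import Mathlib

open NumberField

/-- The Euclidean minimum of a number field `K`:
`M(K) = sup_{x ∈ K} inf_{c ∈ O_K} |N_{K/ℚ}(x − c)|`. -/
noncomputable def euclideanMinimum (K : Type*) [Field K] [NumberField K] : ℝ :=
  ⨆ x : K, ⨅ c : 𝓞 K, |((Algebra.norm ℚ (x - (c : K)) : ℚ) : ℝ)|

/-- A number field `K` has conductor `f` if `f` is the smallest positive integer such that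
`K` embeds into the `f`-th cyclotomic field `ℚ(ζ_f)`.  (Such a `K` is automatically an
abelian extension of `ℚ`.) -/
def HasConductor (K : Type*) [Field K] [NumberField K] (f : ℕ+) : Prop :=
  Nonempty (K →ₐ[ℚ] CyclotomicField f ℚ) ∧
    ∀ m : ℕ+, Nonempty (K →ₐ[ℚ] CyclotomicField m ℚ) → f ≤ m


lemma em_g_periodic : Function.Periodic (fun t : ℝ => (t - round t)^2) 1 := by
  intro t
  simp only [round_add_one]
  push_cast
  ring

lemma em_g_meas : Measurable (fun t : ℝ => (t - round t)^2) := by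
  have : Measurable (fun t : ℝ => (round t : ℤ)) := by
    have h : (fun t : ℝ => (round t : ℤ)) = fun t => ⌊t + 1/2⌋ := by
      funext t; exact round_eq t
    rw [h]
    exact Int.measurable_floor.comp (measurable_id.add_const _)
  have h2 : Measurable (fun t : ℝ => ((round t : ℤ) : ℝ)) :=
    (measurable_from_top (f := fun z : ℤ => (z : ℝ))).comp this
  exact (measurable_id.sub h2).pow_const 2

lemma em_g_le (t : ℝ) : (t - round t)^2 ≤ 1/4 := by
  have := abs_sub_round t
  have h2 := abs_le.mp this
  nlinarith

lemma em_g_int (a b : ℝ) : IntervalIntegrable (fun t : ℝ => (t - round t)^2) MeasureTheory.volume a b := by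
  apply (intervalIntegrable_const (c := (1/4:ℝ))).mono_fun em_g_meas.aestronglyMeasurable
  refine Filter.Eventually.of_forall fun t => ?_
  simp only []
  rw [Real.norm_of_nonneg (sq_nonneg _), Real.norm_of_nonneg (by norm_num)]
  exact em_g_le t

lemma em_g_integral : ∫ t in (0:ℝ)..1, (t - round t)^2 = 1/12 := by
  have h := em_g_periodic.intervalIntegral_add_eq 0 (-1/2)
  rw [zero_add] at h
  rw [h]
  have : ∫ t in (-1/2:ℝ)..(-1/2+1), (t - round t)^2 = ∫ t in (-1/2:ℝ)..(-1/2+1), t^2 := by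
    apply intervalIntegral.integral_congr_ae
    have : ∀ᵐ x : ℝ, x ≠ 1/2 := by
      simp [MeasureTheory.ae_iff]
    filter_upwards [this] with x hx hm
    rw [Set.uIoc_of_le (by norm_num)] at hm
    have : round x = 0 := by
      rw [round_eq, Int.floor_eq_iff]
      constructor
      · push_cast; linarith [hm.1]
      · have := lt_of_le_of_ne (by linarith [hm.2] : x ≤ 1/2) hx
        push_cast; linarith
    simp [this]
  rw [this, integral_pow]
  norm_num

lemma em_g_integral' (s : ℝ) (p : ℕ) (hp : 0 < p) :
    ∫ t in (0:ℝ)..1, ((s + p * t) - round (s + p * t))^2 = 1/12 := by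
  have hp' : (p:ℝ) ≠ 0 := by positivity
  have := intervalIntegral.integral_comp_add_mul (a := 0) (b := 1)
    (fun t : ℝ => (t - round t)^2) hp' s
  rw [this]
  have h2 := em_g_periodic.intervalIntegral_add_zsmul_eq (p : ℤ) s
    (fun a b => em_g_int a b)
  have e1 : s + (p:ℝ) * 0 = s := by ring
  have e2 : s + (p:ℝ) * 1 = s + (p:ℤ) • (1:ℝ) := by simp
  rw [e1, e2, h2]
  have h3 := em_g_periodic.intervalIntegral_add_eq s 0
  rw [zero_add] at h3
  rw [h3, em_g_integral]
  simp only [smul_eq_mul, zsmul_eq_mul]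
  push_cast
  field_simp

lemma em_g_int' (s : ℝ) (p : ℝ) :
    IntervalIntegrable (fun t : ℝ => ((s + p * t) - round (s + p * t))^2) MeasureTheory.volume 0 1 := by
  apply (intervalIntegrable_const (c := (1/4:ℝ))).mono_fun
  · exact (em_g_meas.comp ((measurable_id.const_mul p).const_add s)).aestronglyMeasurable
  refine Filter.Eventually.of_forall fun t => ?_
  simp only []
  rw [Real.norm_of_nonneg (sq_nonneg _), Real.norm_of_nonneg (by norm_num)]
  exact em_g_le _

/-- covering -/
lemma em_cover {ι κ : Type*} [Fintype ι] [Fintype κ] [DecidableEq κ] (π : ι → κ) (p : ℕ) (hp : 0 < p)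
    (hπ : ∀ c, (Finset.univ.filter (fun i => π i = c)).card = p) (b : ι → ℝ) :
    ∃ t : ℝ, p * ∑ i, ((b i + t) - round (b i + t))^2
      - ∑ c, (∑ i with π i = c, ((b i + t) - round (b i + t)))^2
      ≤ Fintype.card κ * (p^2 - 1) / 12 := by
  classical
  have hcard : (Fintype.card ι : ℝ) = Fintype.card κ * p := by
    have : Fintype.card ι = Fintype.card κ * p := by
      rw [← Finset.card_univ, Finset.card_eq_sum_card_fiberwise (f := π) (t := Finset.univ) (by simp)]
      simp [hπ]
    exact_mod_cast this
  set s : κ → ℝ := fun c => ∑ i with π i = c, b i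
  by_contra! hcon
  have key : ∀ t : ℝ, (Fintype.card κ * (p^2 - 1) / 12 : ℝ) <
      p * ∑ i, ((b i + (1:ℕ) * t) - round (b i + (1:ℕ) * t))^2
      - ∑ c, ((s c + p * t) - round (s c + p * t))^2 := by
    intro t
    refine (hcon t).trans_le ?_
    simp only [Nat.cast_one, one_mul]
    refine sub_le_sub_left (Finset.sum_le_sum fun c _ => ?_) _
    have e : ∑ i with π i = c, ((b i + t) - round (b i + t)) = (s c + p * t)
        - ((∑ i with π i = c, round (b i + t) : ℤ) : ℝ) := by
      rw [Finset.sum_sub_distrib, Finset.sum_add_distrib, Finset.sum_const, hπ]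
      push_cast
      simp [s]
    rw [e, sq_le_sq]
    exact round_le _ _
  have I1 : ∀ i, IntervalIntegrable (fun t : ℝ => ((b i + (1:ℕ) * t) - round (b i + (1:ℕ) * t))^2)
      MeasureTheory.volume 0 1 := fun i => em_g_int' _ _
  have I2 : ∀ c, IntervalIntegrable (fun t : ℝ => ((s c + p * t) - round (s c + p * t))^2)
      MeasureTheory.volume 0 1 := fun i => em_g_int' _ _
  have I1' := IntervalIntegrable.sum Finset.univ (fun i _ => I1 i)
  have I2' := IntervalIntegrable.sum Finset.univ (fun i _ => I2 i)
  have I1'' : IntervalIntegrable (fun t : ℝ => (p:ℝ) * ∑ i, ((b i + (1:ℕ) * t) - round (b i + (1:ℕ) * t))^2)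
      MeasureTheory.volume 0 1 := by
    simpa using I1'.const_mul (p:ℝ)
  have I2'' : IntervalIntegrable (fun t : ℝ => ∑ c, ((s c + p * t) - round (s c + p * t))^2)
      MeasureTheory.volume 0 1 := by
    refine I2'.congr (fun t _ => ?_)
    simp
  have hlt := intervalIntegral.integral_pos_iff_support_of_nonneg_ae
    (f := fun t : ℝ => (p * ∑ i, ((b i + (1:ℕ) * t) - round (b i + (1:ℕ) * t))^2
      - ∑ c, ((s c + p * t) - round (s c + p * t))^2) - (Fintype.card κ * (p^2 - 1) / 12 : ℝ))
    (a := 0) (b := 1) (μ := MeasureTheory.volume)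
    (Filter.Eventually.of_forall fun t => by simpa using (key t).le)
    ((I1''.sub I2'').sub intervalIntegrable_const)
  have hpos := hlt.mpr ⟨one_pos, by
    have : Function.support (fun t : ℝ => (p * ∑ i, ((b i + (1:ℕ) * t) - round (b i + (1:ℕ) * t))^2
      - ∑ c, ((s c + p * t) - round (s c + p * t))^2) - (Fintype.card κ * (p^2 - 1) / 12 : ℝ))
      = Set.univ := by
      ext t
      simp only [Function.mem_support, Set.mem_univ, iff_true]
      exact (sub_pos.mpr (key t)).ne'
    rw [this]
    simp⟩
  rw [intervalIntegral.integral_sub (I1''.sub I2'') intervalIntegrable_const,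
    intervalIntegral.integral_sub I1'' I2'', intervalIntegral.integral_const_mul,
    intervalIntegral.integral_finsetSum (fun i _ => I1 i),
    intervalIntegral.integral_finsetSum (fun i _ => I2 i)] at hpos
  simp only [em_g_integral' _ _ hp, em_g_integral' _ _ one_pos, intervalIntegral.integral_const] at hpos
  simp only [Finset.sum_const, Finset.card_univ, nsmul_eq_mul, hcard] at hpos
  simp only [sub_zero, one_smul] at hpos
  nlinarith [hpos]

lemma em_pow_eq {R : Type*} [CommMonoid R] {z : R} {M : ℕ} (h : IsPrimitiveRoot z M) (hM : 0 < M)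
    {i j : ℕ} : z ^ i = z ^ j ↔ i ≡ j [MOD M] := by
  have := (isOfFinOrder_iff_pow_eq_one.mpr ⟨M, hM, h.pow_eq_one⟩).pow_eq_pow_iff_modEq
    (n := i) (m := j)
  rwa [← h.eq_orderOf] at this

lemma em_parseval {ι : Type*} [Fintype ι] (M : ℕ) (hM : 0 < M) (z : ι → ℂ) (hz : ∀ i, z i ^ M = 1)
    (b : ι → ℝ) [DecidableEq ℂ] :
    ∑ k ∈ Finset.range M, ‖∑ i, (b i : ℂ) * z i ^ k‖^2
      = M * ∑ i, ∑ l, if z i = z l then b i * b l else 0 := by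
  have hn : ∀ i, ‖z i‖ = 1 := fun i => Complex.norm_eq_one_of_pow_eq_one (hz i) hM.ne'
  have hc : ∀ i, z i * (starRingEnd ℂ) (z i) = 1 := fun i => by
    rw [Complex.mul_conj, Complex.normSq_eq_norm_sq, hn]; simp
  have hc0 : ∀ i, z i ≠ 0 := fun i h => by have := hc i; simp [h] at this
  have key : ∀ i l, ∑ k ∈ Finset.range M, (z i * (starRingEnd ℂ) (z l))^k =
      if z i = z l then (M:ℂ) else 0 := by
    intro i l
    split_ifs with h
    · rw [h, hc]; simp
    · have hne : z i * (starRingEnd ℂ) (z l) ≠ 1 := by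
        intro h1
        apply h
        have h2 := hc l
        have h3 : (starRingEnd ℂ) (z l) ≠ 0 := by simpa using hc0 l
        exact mul_right_cancel₀ h3 (h1.trans h2.symm)
      rw [geom_sum_eq hne, mul_pow, ← map_pow, hz, hz]; simp
  apply Complex.ofReal_injective
  push_cast
  have e1 : ∀ k, ((‖∑ i, (b i : ℂ) * z i ^ k‖ : ℂ))^2 =
      ∑ i, ∑ l, (b i : ℂ) * b l * (z i * (starRingEnd ℂ) (z l))^k := by
    intro k
    rw [← Complex.mul_conj', map_sum, Finset.sum_mul_sum]
    refine Finset.sum_congr rfl fun i _ => Finset.sum_congr rfl fun l _ => ?_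
    simp only [map_mul, map_pow, Complex.conj_ofReal]
    ring
  simp_rw [e1]
  rw [Finset.sum_comm, Finset.mul_sum]
  refine Finset.sum_congr rfl fun i _ => ?_
  rw [Finset.sum_comm, Finset.mul_sum]
  refine Finset.sum_congr rfl fun l _ => ?_
  rw [← Finset.mul_sum, key]
  split_ifs <;> push_cast <;> ring

lemma em_fiber {ι κ : Type*} [Fintype ι] [Fintype κ] [DecidableEq κ] (π : ι → κ) (b : ι → ℝ) :
    ∑ i, ∑ l, (if π i = π l then b i * b l else 0) = ∑ c, (∑ i with π i = c, b i)^2 := by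
  have : ∀ c, (∑ i with π i = c, b i)^2 = ∑ i, ∑ l, (if π i = c ∧ π l = c then b i * b l else 0) := by
    intro c
    rw [sq, Finset.sum_mul_sum, Finset.sum_filter]
    refine Finset.sum_congr rfl fun i _ => ?_
    split_ifs with h
    · rw [Finset.sum_filter]; simp [h]
    · simp [h]
  symm
  rw [Finset.sum_congr rfl (fun c _ => this c), Finset.sum_comm]
  refine Finset.sum_congr rfl fun i _ => ?_
  rw [Finset.sum_comm]
  refine Finset.sum_congr rfl fun l _ => ?_
  rw [Finset.sum_eq_single (π i)]
  · by_cases h : π i = π l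
    · simp [h]
    · simp [h, Ne.symm h]
  · intro c _ hc
    simp [hc.symm]
  · simp

lemma em_amgm {ι : Type*} [Fintype ι] [Nonempty ι] (f : ι → ℝ) (hf : ∀ i, 0 ≤ f i) (B : ℝ)
    (hB : ∑ i, f i ≤ Fintype.card ι * B) : ∏ i, f i ≤ B ^ Fintype.card ι := by
  have hc : (0:ℝ) < Fintype.card ι := by exact_mod_cast Fintype.card_pos
  have h := Real.geom_mean_le_arith_mean_weighted Finset.univ (fun _ : ι => (1:ℝ)/Fintype.card ι) f
    (fun _ _ => by positivity) (by simp [hc.ne']) (fun i _ => hf i)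
  rw [← Finset.mul_sum] at h
  have h2 : ∏ i, f i ^ ((1:ℝ)/Fintype.card ι) ≤ B := by
    refine h.trans ?_
    rw [one_div, inv_mul_le_iff₀ hc]; exact hB
  rw [Real.finsetProd_rpow _ _ (fun i _ => hf i)] at h2
  have h0 : 0 ≤ ∏ i, f i := Finset.prod_nonneg fun i _ => hf i
  calc ∏ i, f i = ((∏ i, f i) ^ ((1:ℝ)/Fintype.card ι)) ^ Fintype.card ι := by
        rw [← Real.rpow_natCast, ← Real.rpow_mul h0]
        field_simp
        simp
    _ ≤ _ := by gcongr

lemma em_prim_sum (p N : ℕ) (hp : p.Prime) (hN : 0 < N) [NeZero (p * N)] [NeZero N]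
    {Φ : Type*} [Fintype Φ] (w : Φ → ℂ) (hw : Function.Injective w)
    (hw' : ∀ f, IsPrimitiveRoot (w f) (p * N)) (b : ZMod (p * N) → ℝ) :
    ∑ f, ‖∑ j, (b j : ℂ) * w f ^ j.val‖^2 ≤ N * (p * ∑ j, b j ^2
      - ∑ c : ZMod N, (∑ j with (ZMod.castHom (Dvd.intro_left p rfl) (ZMod N)) j = c, b j)^2) := by
  classical
  have hq : 0 < p * N := Nat.mul_pos hp.pos hN
  set ω : ℂ := Complex.exp (2 * Real.pi * Complex.I / ((p * N : ℕ) : ℂ)) with hω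
  have hω' : IsPrimitiveRoot ω (p * N) := Complex.isPrimitiveRoot_exp _ hq.ne'
  have hinj : ∀ i j : ZMod (p * N), ω ^ i.val = ω ^ j.val → i = j := by
    intro i j h
    exact ZMod.val_injective _ (hω'.pow_inj (ZMod.val_lt i) (ZMod.val_lt j) h)
  set F : ℕ → ℝ := fun k => ‖∑ j, (b j : ℂ) * (ω ^ j.val) ^ k‖^2 with hF
  have h1 : ∑ k ∈ Finset.range (p * N), F k = (p * N : ℕ) * ∑ j, b j ^ 2 := by
    rw [hF, em_parseval (p * N) hq (fun j : ZMod (p * N) => ω ^ j.val)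
      (fun j => by rw [← pow_mul, mul_comm, pow_mul, hω'.pow_eq_one, one_pow])]
    congr 1
    refine Finset.sum_congr rfl fun i _ => ?_
    rw [Finset.sum_eq_single i]
    · simp [sq]
    · intro l _ hl
      rw [if_neg]
      intro h; exact hl (hinj _ _ h).symm
    · simp
  have hωp : IsPrimitiveRoot (ω ^ p) N := hω'.pow hq (by ring)
  have h2 : ∑ k ∈ Finset.range N, F (p * k) = N *
      ∑ c : ZMod N, (∑ j with (ZMod.castHom (Dvd.intro_left p rfl) (ZMod N)) j = c, b j)^2 := by
    have e : ∀ k, F (p * k) = ‖∑ j : ZMod (p * N), (b j : ℂ) * ((ω ^ p) ^ j.val) ^ k‖^2 := by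
      intro k
      simp only [hF]
      congr 2
      refine Finset.sum_congr rfl fun j _ => ?_
      congr 1
      rw [← pow_mul, ← pow_mul, ← pow_mul]; congr 1; ring
    simp_rw [e]
    rw [em_parseval N hN (fun j : ZMod (p * N) => (ω ^ p) ^ j.val)
      (fun j => by rw [← pow_mul, mul_comm, pow_mul, hωp.pow_eq_one, one_pow]), ← em_fiber]
    congr 1
    refine Finset.sum_congr rfl fun i _ => Finset.sum_congr rfl fun l _ => ?_
    refine if_congr ?_ rfl rfl
    rw [ZMod.castHom_apply, ZMod.castHom_apply, ZMod.cast_eq_val, ZMod.cast_eq_val,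
      ZMod.natCast_eq_natCast_iff]
    exact em_pow_eq hωp hN
  have h3 : ∑ k ∈ (Finset.range (p * N)).filter (fun k => p ∣ k), F k = ∑ k ∈ Finset.range N, F (p * k) := by
    symm
    apply Finset.sum_bij (fun k _ => p * k)
    · intro k hk
      simp only [Finset.mem_filter, Finset.mem_range, dvd_mul_right, and_true] at hk ⊢
      exact (Nat.mul_lt_mul_left hp.pos).mpr hk
    · intro a _ c _ h; exact Nat.eq_of_mul_eq_mul_left hp.pos h
    · intro c hc
      simp only [Finset.mem_filter, Finset.mem_range] at hc
      obtain ⟨k, rfl⟩ := hc.2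
      exact ⟨k, by simpa using Nat.lt_of_mul_lt_mul_left hc.1, rfl⟩
    · intros; rfl
  have hk : ∀ f, ∃ k < p * N, ω ^ k = w f := fun f => hω'.eq_pow_of_pow_eq_one (hw' f).pow_eq_one
  choose k hk1 hk2 using hk
  have hkinj : Function.Injective k := fun f g h => hw (by rw [← hk2, ← hk2, h])
  have hkp : ∀ f, ¬ p ∣ k f := by
    intro f hd
    have := hw' f
    rw [← hk2, hω'.pow_iff_coprime hq] at this
    exact hp.one_lt.ne' (Nat.dvd_one.mp (this ▸ Nat.dvd_gcd hd (Dvd.intro _ rfl)))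
  have h4 : ∑ f, ‖∑ j, (b j : ℂ) * w f ^ j.val‖^2 = ∑ f, F (k f) := by
    refine Finset.sum_congr rfl fun f _ => ?_
    simp only [hF]
    congr 2
    refine Finset.sum_congr rfl fun j _ => ?_
    rw [← hk2, ← pow_mul, ← pow_mul, mul_comm (k f)]
  have h5 : ∑ f, F (k f) ≤ ∑ i ∈ (Finset.range (p * N)).filter (fun k => ¬ p ∣ k), F i := by
    rw [← Finset.sum_image (f := F) (s := Finset.univ) (g := k) (fun a _ c _ h => hkinj h)]
    apply Finset.sum_le_sum_of_subset_of_nonneg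
    · intro i hi
      simp only [Finset.mem_image, Finset.mem_univ, true_and] at hi
      obtain ⟨f, rfl⟩ := hi
      simp [hk1, hkp]
    · intros; positivity
  have h6 := Finset.sum_filter_add_sum_filter_not (Finset.range (p * N)) (fun k => p ∣ k) F
  rw [h4]
  refine h5.trans ?_
  rw [h1, h3, h2] at h6
  push_cast at h6
  linarith

lemma em_sum_val {A : Type*} [AddCommMonoid A] {q : ℕ} [NeZero q] (g : ℕ → A) :
    ∑ j : ZMod q, g j.val = ∑ k ∈ Finset.range q, g k := by
  symm
  apply Finset.sum_bij' (fun (k : ℕ) _ => (k : ZMod q)) (fun j _ => j.val)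
  · simp
  · intro j _; simpa using ZMod.val_lt j
  · intro k hk; exact ZMod.val_natCast_of_lt (Finset.mem_range.mp hk)
  · intro j _; simp
  · intro k hk
    rw [ZMod.val_natCast_of_lt (Finset.mem_range.mp hk)]

lemma em_fibcard (p N : ℕ) (hN : 0 < N) [NeZero (p * N)] [NeZero N] (c : ZMod N) :
    (Finset.univ.filter (fun j : ZMod (p * N) =>
      (ZMod.castHom (Dvd.intro_left p rfl) (ZMod N)) j = c)).card = p := by
  set f := (ZMod.castHom (Dvd.intro_left p rfl : N ∣ p * N) (ZMod N)) with hf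
  have hs : Function.Surjective f := ZMod.castHom_surjective _
  have h := fun c => AddMonoidHom.card_fiber_eq_of_mem_range f.toAddMonoidHom (x := c) (y := 0)
    (by simpa using hs c) (by simpa using hs 0)
  have hsum := Finset.card_eq_sum_card_fiberwise (f := f) (s := Finset.univ) (t := Finset.univ) (by simp)
  have h' : ∀ c ∈ Finset.univ, (Finset.univ.filter (fun j => f j = c)).card =
    (Finset.univ.filter (fun j => f j = 0)).card := fun c _ => h c
  rw [Finset.sum_congr rfl h'] at hsum
  simp only [Finset.card_univ, ZMod.card, Finset.sum_const, smul_eq_mul] at hsum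
  rw [h' c (Finset.mem_univ _)]
  exact (Nat.eq_of_mul_eq_mul_left hN ((mul_comm N p).trans hsum)).symm

lemma em_norm (p N q : ℕ) (hq : q = p * N) [NeZero q] (hp : p.Prime) (hN : 0 < N)
    (L : Type*) [Field L] [NumberField L] [IsCyclotomicExtension {q} ℚ L] (ζ : L)
    (hζ : IsPrimitiveRoot ζ q) (hfr : Module.finrank ℚ L = N * (p - 1)) (b : ZMod q → ℚ) :
    ∃ t : ℝ, ((Algebra.norm ℚ (∑ j, algebraMap ℚ L (b j - round ((b j : ℝ) + t)) * ζ ^ j.val) : ℚ) : ℝ)^2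
      ≤ ((N : ℝ) * (p + 1) / 12) ^ (N * (p - 1)) := by
  subst hq
  have : NeZero N := ⟨hN.ne'⟩
  obtain ⟨t, ht⟩ := em_cover (fun j => (ZMod.castHom (Dvd.intro_left p rfl) (ZMod N)) j) p hp.pos
    (em_fibcard p N hN) (fun j => (b j : ℝ))
  refine ⟨t, ?_⟩
  rw [ZMod.card] at ht
  set e : ZMod (p * N) → ℝ := fun j => ((b j : ℝ) + t) - round ((b j : ℝ) + t) with he
  have hw' : ∀ f : L →ₐ[ℚ] ℂ, IsPrimitiveRoot (f ζ) (p * N) := fun f =>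
    hζ.map_of_injective f.toRingHom.injective
  have hw : Function.Injective (fun f : L →ₐ[ℚ] ℂ => f ζ) := by
    intro f g h
    exact (hζ.powerBasis ℚ).algHom_ext (by simpa using h)
  have h1 := em_prim_sum p N hp hN (fun f : L →ₐ[ℚ] ℂ => f ζ) hw hw' e
  have h2 : ∑ f : L →ₐ[ℚ] ℂ, ‖∑ j, (e j : ℂ) * (f ζ) ^ j.val‖^2 ≤ N * (N * (p^2 - 1) / 12) := by
    refine h1.trans ?_
    gcongr
  have hgs : ∀ f : L →ₐ[ℚ] ℂ, ∑ j : ZMod (p * N), (f ζ) ^ j.val = 0 := by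
    intro f
    have h0 := (hw' f).geom_sum_eq_zero (by nlinarith [hp.two_le])
    rw [← h0]
    exact em_sum_val (fun k => (f ζ) ^ k)
  have h3 : ∀ f : L →ₐ[ℚ] ℂ, f (∑ j, algebraMap ℚ L (b j - round ((b j : ℝ) + t)) * ζ ^ j.val) =
      ∑ j, (e j : ℂ) * (f ζ) ^ j.val := by
    intro f
    have : ∑ j, (e j : ℂ) * (f ζ) ^ j.val = ∑ j, ((e j : ℂ) - t) * (f ζ) ^ j.val := by
      simp only [sub_mul, Finset.sum_sub_distrib, ← Finset.mul_sum, hgs, mul_zero, sub_zero]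
    rw [this, map_sum]
    refine Finset.sum_congr rfl fun j _ => ?_
    rw [map_mul, map_pow, AlgHom.commutes]
    congr 1
    simp only [he]
    push_cast
    simp
    ring
  have hcard : Fintype.card (L →ₐ[ℚ] ℂ) = N * (p - 1) := by
    rw [← hfr]; exact AlgHom.card ℚ L ℂ
  have h4 : ((Algebra.norm ℚ (∑ j, algebraMap ℚ L (b j - round ((b j : ℝ) + t)) * ζ ^ j.val) : ℚ) : ℝ)^2
      = ∏ f : L →ₐ[ℚ] ℂ, ‖∑ j, (e j : ℂ) * (f ζ) ^ j.val‖^2 := by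
    have := Algebra.norm_eq_prod_embeddings ℚ ℂ (∑ j, algebraMap ℚ L (b j - round ((b j : ℝ) + t)) * ζ ^ j.val)
    rw [Finset.prod_congr rfl (fun f _ => h3 f)] at this
    rw [Finset.prod_pow, ← norm_prod, ← this]
    simp
  rw [h4, ← hcard]
  have hp1 := hp.two_le
  have : Nonempty (L →ₐ[ℚ] ℂ) := by
    rw [← Fintype.card_pos_iff, hcard]
    exact Nat.mul_pos hN (by omega)
  apply em_amgm _ (fun f => by positivity)
  refine h2.trans_eq ?_
  rw [hcard]
  push_cast [Nat.cast_sub (by omega : 1 ≤ p)]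
  ring

lemma em_lte {p k : ℕ} (hp : p.Prime) (a : ℤ) (ha : (p:ℤ) ∣ a) (h2 : p = 2 → (4:ℤ) ∣ a)
    (h : (p:ℤ)^(k+1) ∣ (1 + a)^p - 1) : (p:ℤ)^k ∣ a := by
  have hpi : Prime (p:ℤ) := Nat.prime_iff_prime_int.mp hp
  have hx : ¬ (p:ℤ) ∣ 1 + a := by
    intro h1
    have : (p:ℤ) ∣ 1 := by simpa using dvd_sub h1 ha
    exact hpi.not_isUnit (isUnit_of_dvd_one this)
  have hself : emultiplicity (p:ℤ) ((p:ℕ):ℤ) = 1 :=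
    (FiniteMultiplicity.of_prime_left hpi hpi.ne_zero).emultiplicity_self
  have key : emultiplicity (p:ℤ) ((1+a)^p - 1^p) = emultiplicity (p:ℤ) a + 1 := by
    rcases hp.eq_two_or_odd' with h | h
    · subst h
      have := Int.two_pow_sub_pow' (x := 1 + a) (y := 1) 2 (by simpa using h2 rfl) hx
      simpa [show (1 + a - 1) = a by ring] using this.trans (by rw [show ((2:ℕ):ℤ) = 2 from rfl] at hself; simp [hself])
    · have := Int.emultiplicity_pow_sub_pow hp h (x := 1 + a) (y := 1) (by simpa using ha) hx p
      rw [this]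
      congr 1
      · congr 1; ring
      · rw [← Int.natCast_emultiplicity]; exact hself
  rw [one_pow] at key
  have h3 := le_emultiplicity_of_pow_dvd h
  rw [key] at h3
  apply pow_dvd_of_le_emultiplicity
  push_cast at h3
  exact (ENat.add_le_add_iff_right (by simp)).mp h3

section
variable {q : ℕ} [NeZero q] {L : Type*} [Field L] [NumberField L]
  {ζ : L}

lemma em_zv (hζ : IsPrimitiveRoot ζ q) (i : ℕ) : ζ ^ ((i : ZMod q).val) = ζ ^ i := by
  rw [em_pow_eq hζ (NeZero.pos q), ZMod.val_natCast]
  exact Nat.mod_modEq i q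

lemma em_zmul (hζ : IsPrimitiveRoot ζ q) (i j : ZMod q) : ζ ^ ((i * j).val) = (ζ ^ i.val) ^ j.val := by
  rw [← pow_mul, ← em_zv hζ (i.val * j.val)]
  simp

lemma em_zadd (hζ : IsPrimitiveRoot ζ q) (i j : ZMod q) : ζ ^ ((i + j).val) = ζ ^ i.val * ζ ^ j.val := by
  rw [← pow_add, ← em_zv hζ (i.val + j.val)]
  simp

variable [IsCyclotomicExtension {q} ℚ L]

lemma em_rep (hζ : IsPrimitiveRoot ζ q) (y : L) : ∃ b : ZMod q → ℚ, y = ∑ j, algebraMap ℚ L (b j) * ζ ^ j.val := by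
  have hy : y ∈ Submodule.span ℚ (Set.range (fun j : ZMod q => ζ ^ j.val)) := by
    have h1 : y ∈ Algebra.adjoin ℚ {ζ} := by
      rw [IsCyclotomicExtension.adjoin_primitive_root_eq_top hζ]; trivial
    rw [Algebra.adjoin_singleton_eq_range_aeval] at h1
    obtain ⟨P, rfl⟩ := h1
    rw [AlgHom.toRingHom_eq_coe, RingHom.coe_coe, Polynomial.aeval_eq_sum_range]
    refine Submodule.sum_mem _ fun i _ => Submodule.smul_mem _ _ ?_
    exact Submodule.subset_span ⟨(i : ZMod q), em_zv hζ i⟩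
  rw [Submodule.mem_span_range_iff_exists_fun] at hy
  obtain ⟨b, hb⟩ := hy
  exact ⟨b, by rw [← hb]; simp [Algebra.smul_def]⟩

variable {K : Type*} [Field K] [NumberField K] [Algebra K L]

lemma em_ext (hζ : IsPrimitiveRoot ζ q) (σ τ : L ≃ₐ[K] L) (h : σ ζ = τ ζ) : σ = τ := by
  have := (hζ.powerBasis ℚ).algHom_ext (f := (σ.toAlgHom.restrictScalars ℚ))
    (g := (τ.toAlgHom.restrictScalars ℚ)) (by simpa using h)
  ext x
  simpa using DFunLike.congr_fun this x
end

section
variable {p k : ℕ} {L : Type*} [Field L] [NumberField L]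
  {ζ : L} [IsCyclotomicExtension {p^(k+1)} ℚ L]
  {K : Type*} [Field K] [NumberField K] [Algebra K L]

lemma em_A (hp : p.Prime) (hk : 1 ≤ k) (hζ : IsPrimitiveRoot ζ (p^(k+1)))
    (hno : ¬ ∀ x : K, algebraMap K L x ∈ IntermediateField.adjoin ℚ {ζ ^ p}) (σ : L ≃ₐ[K] L) (u : ℕ) (h : σ ζ = ζ ^ (1 + p^k * u)) : σ = 1 := by
  have : NeZero (p^(k+1)) := ⟨(pow_pos hp.pos _).ne'⟩
  by_contra hne
  set ξ : L := ζ ^ (p^k * u) with hξ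
  have hσ : σ ζ = ξ * ζ := by rw [h, pow_add, pow_one, mul_comm]
  have hξ1 : ξ ≠ 1 := fun h1 => hne (em_ext hζ σ 1 (by rw [hσ, h1]; simp))
  have hξp : ξ ^ p = 1 := by
    rw [hξ, ← pow_mul, show p^k * u * p = p^(k+1) * u by ring, pow_mul, hζ.pow_eq_one, one_pow]
  have hprim : IsPrimitiveRoot ξ p := by
    have := orderOf_eq_prime_iff (p := p) (x := ξ) (hp := ⟨hp⟩)
    exact IsPrimitiveRoot.iff_orderOf.mpr (this.mpr ⟨hξp, hξ1⟩)
  have hσξ : σ ξ = ξ := by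
    obtain ⟨l, rfl⟩ : ∃ l, k = l + 1 := ⟨k - 1, by omega⟩
    rw [hξ, map_pow, hσ, mul_pow]
    have : ξ ^ (p^(l+1) * u) = 1 := by
      rw [show p^(l+1)*u = p * (p^l*u) by ring, pow_mul, hξp, one_pow]
    rw [this, one_mul]
  have hpow : ∀ i : ℕ, (σ^i) ζ = ξ^i * ζ := by
    intro i
    induction i with
    | zero => simp
    | succ i ih =>
      rw [pow_succ', AlgEquiv.mul_apply, ih, map_mul, map_pow, hσξ, hσ]; ring
  apply hno
  intro x
  obtain ⟨b, hb⟩ := em_rep hζ (algebraMap K L x)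
  have hfix : ∀ i : ℕ, ∑ j : ZMod (p^(k+1)), algebraMap ℚ L (b j) * (ξ^i * ζ) ^ j.val = algebraMap K L x := by
    intro i
    have := (σ^i).commutes x
    rw [hb, map_sum] at this
    rw [hb, ← this]
    refine Finset.sum_congr rfl fun j _ => ?_
    rw [map_mul, map_pow, hpow]
    congr 1
    simp
  have hsum : (p : L) * algebraMap K L x =
      ∑ j : ZMod (p^(k+1)), algebraMap ℚ L (b j) * ζ^j.val * ∑ i ∈ Finset.range p, (ξ^j.val)^i := by
    have : (p : L) * algebraMap K L x = ∑ i ∈ Finset.range p, algebraMap K L x := by simp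
    rw [this, ← Finset.sum_congr rfl (fun i _ => hfix i), Finset.sum_comm]
    refine Finset.sum_congr rfl fun j _ => ?_
    rw [Finset.mul_sum]
    refine Finset.sum_congr rfl fun i _ => ?_
    ring
  have hp0 : (p : L) ≠ 0 := by exact_mod_cast hp.ne_zero
  have hx : algebraMap K L x = (p : L)⁻¹ * ((p : L) * algebraMap K L x) := by field_simp
  rw [hx, hsum]
  have hpm : ∀ n : ℕ, (n : L) ∈ IntermediateField.adjoin ℚ {ζ ^ p} := fun n => natCast_mem _ n
  refine mul_mem (inv_mem (hpm p)) (sum_mem fun j _ => ?_)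
  by_cases hj : p ∣ j.val
  · have h1 : ξ ^ j.val = 1 := (hprim.pow_eq_one_iff_dvd _).mpr hj
    rw [h1]
    obtain ⟨l, hl⟩ := hj
    rw [hl, pow_mul]
    refine mul_mem (mul_mem ?_ (pow_mem (IntermediateField.mem_adjoin_simple_self ℚ _) _)) ?_
    · exact IntermediateField.algebraMap_mem _ _
    · simpa using hpm p
  · have h1 : ξ ^ j.val ≠ 1 := fun h => hj ((hprim.pow_eq_one_iff_dvd _).mp h)
    rw [geom_sum_eq h1, ← pow_mul, mul_comm j.val, pow_mul, hξp]
    simp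

lemma em_B (hp : p.Prime) (hk : 1 ≤ k) (hζ : IsPrimitiveRoot ζ (p^(k+1)))
    (hno : ¬ ∀ x : K, algebraMap K L x ∈ IntermediateField.adjoin ℚ {ζ ^ p}) (d : ℕ) : ∀ (s u : ℕ) (σ : L ≃ₐ[K] L), k ≤ s + d → 1 ≤ s → (p = 2 → 2 ≤ s) →
    σ ζ = ζ ^ (1 + p^s * u) → σ = 1 := by
  have : NeZero (p^(k+1)) := ⟨(pow_pos hp.pos _).ne'⟩
  induction d with
  | zero =>
    intro s u σ hs _ _ h
    apply em_A hp hk hζ hno σ (p^(s-k) * u)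
    rw [h, ← mul_assoc, ← pow_add]; congr 4; omega
  | succ d ih =>
    intro s u σ hs h1 h2 h
    have hpow : ∀ i : ℕ, (σ^i) ζ = ζ ^ ((1 + p^s * u)^i) := by
      intro i
      induction i with
      | zero => simp
      | succ i ih =>
        rw [pow_succ', AlgEquiv.mul_apply, ih, map_pow, h, ← pow_mul]; congr 1; ring
    obtain ⟨u', hu'⟩ : ∃ u', (1 + p^s * u)^p = 1 + p^(s+1) * u' := by
      have h3 : (1:ℕ) ≡ (1 + p^s * u)^p [MOD p^(s+1)] := by
        have h0 : (1 + p^s*u : ℤ) ≡ 1 [ZMOD (p^s : ℕ)] := by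
          apply Int.ModEq.symm
          rw [Int.modEq_iff_dvd]; push_cast; simp
        have := dvd_sub_pow_of_dvd_sub (R := ℤ) (p := p) (a := (1 + p^s * u : ℤ)) (b := 1) (by
          have : (p:ℤ) ∣ p^s := dvd_pow_self _ (by omega)
          simpa using this.mul_right _) 0
        clear this
        rw [← Int.natCast_modEq_iff, Int.modEq_iff_dvd]
        push_cast
        obtain ⟨s', rfl⟩ : ∃ s', s = s' + 1 := ⟨s - 1, by omega⟩
        have hg := Commute.mul_geom_sum₂ (Commute.one_right (1 + (p:ℤ)^(s'+1) * u)) p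
        rw [one_pow] at hg
        rw [← hg, pow_succ]
        refine mul_dvd_mul ⟨u, by ring⟩ ?_
        have hm : ∀ i, (1 + (p:ℤ)^(s'+1)*u)^i ≡ 1 [ZMOD p] := fun i => by
          have : (1 + (p:ℤ)^(s'+1)*u) ≡ 1 [ZMOD p] := by
            apply Int.ModEq.symm
            rw [Int.modEq_iff_dvd]
            exact ⟨p^s' * u, by ring⟩
          simpa using this.pow i
        apply Int.modEq_zero_iff_dvd.mp
        calc _ ≡ ∑ i ∈ Finset.range p, (1:ℤ) [ZMOD p] := by
              rw [← ZMod.intCast_eq_intCast_iff]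
              push_cast
              refine Finset.sum_congr rfl fun i _ => ?_
              have := (ZMod.intCast_eq_intCast_iff _ _ _).mpr (hm i)
              push_cast at this
              simpa using this
          _ ≡ 0 [ZMOD p] := by simp [Int.modEq_zero_iff_dvd]
      have h4 : 1 ≤ (1 + p^s * u)^p := Nat.one_le_pow _ _ (by omega)
      obtain ⟨c, hc⟩ := (Nat.modEq_iff_dvd' h4).mp h3
      exact ⟨c, by omega⟩
    have hσp : σ ^ p = 1 := ih (s+1) u' (σ^p) (by omega) (by omega) (fun h => by have := h2 h; omega)
      (by rw [hpow, hu'])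
    have h5 : ζ ^ ((1 + p^s*u)^p) = ζ ^ 1 := by rw [← hpow, hσp]; simp
    rw [em_pow_eq hζ (NeZero.pos _)] at h5
    have h6 : (p:ℤ)^(k+1) ∣ (1 + (p^s*u : ℕ) : ℤ)^p - 1 := by
      have := (Nat.modEq_iff_dvd.mp h5.symm)
      push_cast at this ⊢
      exact this
    have h7 := em_lte hp ((p^s*u : ℕ) : ℤ) (by
        push_cast
        exact (dvd_pow_self _ (by omega)).mul_right _)
      (fun h => by
        subst h
        push_cast
        have : (2:ℤ)^2 ∣ 2^s := pow_dvd_pow _ (h2 rfl)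
        norm_num at this
        exact this.mul_right _) h6
    have h8 : p^k ∣ p^s * u := by exact_mod_cast h7
    obtain ⟨c, hc⟩ := h8
    exact em_A hp hk hζ hno σ c (by rw [h, hc])
end

lemma em_avg {q : ℕ} [NeZero q] {L : Type*} [Field L] [NumberField L] {ζ : L}
    (hζ : IsPrimitiveRoot ζ q) [IsCyclotomicExtension {q} ℚ L]
    {K : Type*} [Field K] [NumberField K] [Algebra K L] (x : K) :
    ∃ b : ZMod q → ℚ, algebraMap K L x = ∑ j, algebraMap ℚ L (b j) * ζ ^ j.val ∧
      ∀ (σ : L ≃ₐ[K] L) (j : ZMod q), b ((hζ.autToPow K σ : (ZMod q)ˣ) * j) = b j := by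
  classical
  obtain ⟨b, hb⟩ := em_rep hζ (algebraMap K L x)
  set u := hζ.autToPow K with hu
  set m : ℕ := Fintype.card (L ≃ₐ[K] L) with hm
  have hm0 : m ≠ 0 := Fintype.card_ne_zero
  refine ⟨fun j => (m:ℚ)⁻¹ * ∑ σ : L ≃ₐ[K] L, b ((u σ⁻¹ : (ZMod q)ˣ) * j), ?_, ?_⟩
  · have h1 : ∀ σ : L ≃ₐ[K] L, algebraMap K L x =
        ∑ j, algebraMap ℚ L (b ((u σ⁻¹ : (ZMod q)ˣ) * j)) * ζ ^ j.val := by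
      intro σ
      have := σ.commutes x
      rw [hb, map_sum] at this
      rw [hb, ← this]
      refine Fintype.sum_equiv (Units.mulLeft (u σ)) _ _ fun j => ?_
      rw [map_mul, map_pow]
      congr 1
      · simp [← mul_assoc]
      · rw [Units.mulLeft_apply, em_zmul hζ, IsPrimitiveRoot.autToPow_spec]
    have h2 : (m : L) * algebraMap K L x = ∑ σ : L ≃ₐ[K] L, algebraMap K L x := by
      simp [hm]
    have hm0' : (m : L) ≠ 0 := by exact_mod_cast hm0
    have h3 : algebraMap K L x = (m : L)⁻¹ * ((m : L) * algebraMap K L x) := by field_simp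
    rw [h3, h2, Finset.sum_congr rfl (fun σ _ => h1 σ), Finset.sum_comm, Finset.mul_sum]
    refine Finset.sum_congr rfl fun j _ => ?_
    simp [Finset.sum_mul, mul_assoc, Finset.mul_sum]
  · intro τ j
    simp only
    congr 1
    refine Fintype.sum_equiv (Equiv.mulLeft τ⁻¹) _ _ fun σ => ?_
    rw [← mul_assoc, ← Units.val_mul, ← map_mul]
    simp

lemma em_fixed {q : ℕ} [NeZero q] {L : Type*} [Field L] [NumberField L] {ζ : L}
    (hζ : IsPrimitiveRoot ζ q) [IsCyclotomicExtension {q} ℚ L]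
    {K : Type*} [Field K] [NumberField K] [Algebra K L]
    (w : L) (hw : IsIntegral ℤ w) (h : ∀ σ : L ≃ₐ[K] L, σ w = w) :
    ∃ c : 𝓞 K, algebraMap K L c = w := by
  have : IsGalois ℚ L := IsCyclotomicExtension.isGalois {q} ℚ L
  have : IsGalois K L := IsGalois.tower_top_of_isGalois ℚ K L
  obtain ⟨y, hy⟩ := (IsGalois.mem_range_algebraMap_iff_fixed (F := K) (E := L) w).mpr h
  have hyi : IsIntegral ℤ y := by
    rw [← hy] at hw
    exact (isIntegral_algebraMap_iff (algebraMap K L).injective).mp hw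
  exact ⟨⟨y, hyi⟩, hy⟩

lemma em_normpow {L : Type*} [Field L] [NumberField L]
    {K : Type*} [Field K] [NumberField K] [Algebra K L] (y : K) :
    Algebra.norm ℚ (algebraMap K L y) = (Algebra.norm ℚ y) ^ Module.finrank K L := by
  rw [← Algebra.norm_norm (S := K), Algebra.norm_algebraMap, map_pow]

lemma em_odd {p N q : ℕ} (hq : q = p * N) [NeZero q] (hp : p.Prime) (hN : 0 < N)
    {L : Type*} [Field L] [NumberField L] {ζ : L}
    (hζ : IsPrimitiveRoot ζ q) [IsCyclotomicExtension {q} ℚ L]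
    (hfr : Module.finrank ℚ L = N * (p - 1))
    {K : Type*} [Field K] [NumberField K] [Algebra K L] (x : K) :
    ∃ c : 𝓞 K, (((Algebra.norm ℚ (x - (c : K)) : ℚ) : ℝ)) ^ (2 * Module.finrank K L) ≤
      ((N:ℝ)*(p+1)/12)^(N*(p-1)) := by
  classical
  obtain ⟨b, hb, hinv⟩ := em_avg hζ x
  obtain ⟨t, ht⟩ := em_norm p N q hq hp hN L ζ hζ hfr b
  obtain ⟨c, hc⟩ := em_fixed hζ (K := K)
    (∑ j : ZMod q, ((round ((b j:ℝ)+t) : ℤ) : L) * ζ ^ j.val)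
    (IsIntegral.sum _ fun j _ => (isIntegral_algebraMap (R := ℤ) (x := round ((b j:ℝ)+t))).mul ((hζ.isIntegral (NeZero.pos q)).pow _))
    (by
      intro σ
      rw [map_sum]
      refine Fintype.sum_equiv (Units.mulLeft (hζ.autToPow K σ)) _ _ fun j => ?_
      rw [map_mul, map_pow, map_intCast, Units.mulLeft_apply, hinv, em_zmul hζ,
        IsPrimitiveRoot.autToPow_spec])
  refine ⟨c, ?_⟩
  have h1 : algebraMap K L (x - (c:K)) = ∑ j, algebraMap ℚ L (b j - round ((b j:ℝ)+t)) * ζ^j.val := by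
    rw [map_sub, hb, hc, ← Finset.sum_sub_distrib]
    refine Finset.sum_congr rfl fun j _ => ?_
    simp [sub_mul]
  rw [← h1, em_normpow] at ht
  push_cast at ht
  rw [mul_comm 2, pow_mul]
  exact ht

lemma em_top {q : ℕ} [NeZero q] {L : Type*} [Field L] [NumberField L] {ζ : L}
    (hζ : IsPrimitiveRoot ζ q) [IsCyclotomicExtension {q} ℚ L]
    (K : Type*) [Field K] [NumberField K] [Algebra K L] : Algebra.adjoin K {ζ} = ⊤ := by
  rw [eq_top_iff]
  intro y _
  obtain ⟨b, rfl⟩ := em_rep hζ y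
  refine sum_mem fun j _ => mul_mem ?_ (pow_mem (Algebra.self_mem_adjoin_singleton K ζ) _)
  rw [IsScalarTower.algebraMap_apply ℚ K L]
  exact Subalgebra.algebraMap_mem _ _

lemma em_minpoly {q : ℕ} [NeZero q] {L : Type*} [Field L] [NumberField L] {ζ : L}
    (hζ : IsPrimitiveRoot ζ q) [IsCyclotomicExtension {q} ℚ L]
    (K : Type*) [Field K] [NumberField K] [Algebra K L] :
    (minpoly K ζ).map (algebraMap K L) = ∏ σ : L ≃ₐ[K] L, (Polynomial.X - Polynomial.C (σ ζ)) := by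
  have : IsGalois ℚ L := IsCyclotomicExtension.isGalois {q} ℚ L
  have : IsGalois K L := IsGalois.tower_top_of_isGalois ℚ K L
  have hint : IsIntegral K ζ := Algebra.IsIntegral.isIntegral ζ
  apply Polynomial.eq_of_monic_of_dvd_of_natDegree_le (Polynomial.monic_prod_X_sub_C _ _)
    ((minpoly.monic hint).map _)
  · apply Finset.prod_dvd_of_coprime
    · intro σ _ τ _ hne
      apply Polynomial.pairwise_coprime_X_sub_C (s := fun σ : L ≃ₐ[K] L => σ ζ) _ hne
      intro σ τ h
      exact em_ext hζ σ τ h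
    · intro σ _
      rw [Polynomial.dvd_iff_isRoot, Polynomial.IsRoot.def, Polynomial.eval_map_algebraMap]
      rw [Polynomial.aeval_algEquiv]
      simp
  · rw [Polynomial.natDegree_map, Polynomial.natDegree_prod_of_monic _ _ (fun σ _ => Polynomial.monic_X_sub_C _)]
    simp only [Polynomial.natDegree_X_sub_C, Finset.sum_const, Finset.card_univ, smul_eq_mul, mul_one]
    rw [← Nat.card_eq_fintype_card, IsGalois.card_aut_eq_finrank]
    exact minpoly.natDegree_le ζ

lemma em_deriv {q : ℕ} [NeZero q] {L : Type*} [Field L] [NumberField L] {ζ : L}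
    (hζ : IsPrimitiveRoot ζ q) [IsCyclotomicExtension {q} ℚ L]
    (K : Type*) [Field K] [NumberField K] [Algebra K L] [DecidableEq (L ≃ₐ[K] L)] :
    Polynomial.aeval ζ (Polynomial.derivative (minpoly K ζ)) =
      ∏ σ ∈ Finset.univ.erase (1 : L ≃ₐ[K] L), (ζ - σ ζ) := by
  rw [← Polynomial.eval_map_algebraMap, ← Polynomial.derivative_map, em_minpoly hζ K,
    ← Finset.mul_prod_erase _ _ (Finset.mem_univ 1)]
  simp [Polynomial.eval_prod]

lemma em_discr {q : ℕ} [NeZero q] {L : Type*} [Field L] [NumberField L] {ζ : L}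
    (hζ : IsPrimitiveRoot ζ q) [IsCyclotomicExtension {q} ℚ L]
    (K : Type*) [Field K] [NumberField K] [Algebra K L] [DecidableEq (L ≃ₐ[K] L)] :
    ((discr L).natAbs : ℚ) ≤ |∏ σ ∈ Finset.univ.erase (1 : L ≃ₐ[K] L), Algebra.norm ℚ (ζ - σ ζ)| *
      ((discr K).natAbs : ℚ) ^ Module.finrank K L := by
  rw [natAbs_discr_eq_absNorm_differentIdeal_mul_natAbs_discr_pow K (𝓞 K) L (𝓞 L)]
  push_cast
  gcongr
  have hint := hζ.isIntegral (NeZero.pos q)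
  let z : 𝓞 L := ⟨ζ, hint⟩
  have hz : algebraMap (𝓞 L) L z = ζ := rfl
  have h1 := aeval_derivative_mem_differentIdeal (𝓞 K) K L z (by rw [hz]; exact em_top hζ K)
  have h2 := Ideal.absNorm_dvd_norm_of_mem h1
  set y := Polynomial.aeval z (Polynomial.derivative (minpoly (𝓞 K) z)) with hy
  have h3 : algebraMap (𝓞 L) L y = ∏ σ ∈ Finset.univ.erase (1 : L ≃ₐ[K] L), (ζ - σ ζ) := by
    rw [← em_deriv hζ K, hy, ← Polynomial.aeval_algebraMap_apply, hz]
    have h5 : minpoly K ζ = (minpoly (𝓞 K) z).map (algebraMap (𝓞 K) K) := by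
      rw [← hz]
      rw [minpoly.isIntegrallyClosed_eq_field_fractions K L (s := z) (Algebra.IsIntegral.isIntegral (R := 𝓞 K) z)]
    rw [h5, Polynomial.derivative_map, Polynomial.aeval_map_algebraMap]
  have h4 : ((Algebra.norm ℤ y : ℤ) : ℚ) = ∏ σ ∈ Finset.univ.erase (1 : L ≃ₐ[K] L), Algebra.norm ℚ (ζ - σ ζ) := by
    rw [← map_prod, ← h3]
    exact Algebra.coe_norm_int y
  rw [← h4]
  have h6 : (Algebra.norm ℤ y) ≠ 0 := by
    intro h0
    rw [h0] at h4
    have := Finset.prod_eq_zero_iff.mp h4.symm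
    obtain ⟨σ, hσ, h⟩ := this
    rw [Algebra.norm_eq_zero_iff, sub_eq_zero] at h
    exact (Finset.mem_erase.mp hσ).1 (em_ext hζ σ 1 h.symm)
  have h7 := Int.le_of_dvd (abs_pos.mpr h6) ((dvd_abs _ _).mpr h2)
  exact_mod_cast h7

lemma em_num1 (p : ℕ) (hp : 3 ≤ p) : (((p:ℝ)+1)/3)^p ≤ (p:ℝ)^(p-2) := by
  have hp0 : (0:ℝ) < p := by positivity
  have h1 : (((p:ℝ)+1)/p)^p ≤ 3 := by
    have h2 : ((p:ℝ)+1)/p ≤ Real.exp (1/p) := by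
      have := Real.add_one_le_exp (1/(p:ℝ))
      have e : ((p:ℝ)+1)/p = 1/p + 1 := by field_simp; ring
      rw [e]; exact this
    calc (((p:ℝ)+1)/p)^p ≤ (Real.exp (1/p))^p := by gcongr
      _ = Real.exp 1 := by rw [← Real.exp_nat_mul]; congr 1; field_simp
      _ ≤ 3 := by have := Real.exp_one_lt_d9; linarith
  have h3 : ∀ n : ℕ, 3 ≤ n → n^2*3 ≤ 3^n := by
    intro n hn
    induction n, hn using Nat.le_induction with
    | base => norm_num
    | succ n hn ih => rw [pow_succ 3 n]; nlinarith
  have h4 : (p:ℝ)^2*3 ≤ 3^p := by exact_mod_cast h3 p hp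
  have h5 : (p:ℝ)^p = p^(p-2) * p^2 := by rw [← pow_add]; congr 1; omega
  rw [div_pow] at h1 ⊢
  rw [div_le_iff₀ (by positivity)] at h1 ⊢
  calc ((p:ℝ)+1)^p ≤ 3 * p^p := h1
    _ = p^(p-2) * (p^2*3) := by rw [h5]; ring
    _ ≤ _ := by gcongr

lemma em_num2 (p k m : ℕ) (hp : 3 ≤ p) (hk : 1 ≤ k) (hm : m ≤ p - 1) (D : ℝ) (hD0 : 0 ≤ D)
    (hD : (p:ℝ)^(p^k*((p-1)*(k+1)-1)) ≤ p^(m-1) * D) :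
    ((p^k:ℝ)*(p+1)/3)^(p^k*(p-1)) ≤ D := by
  have hp0 : (0:ℝ) < p := by positivity
  have hp1 : (1:ℝ) ≤ p := by exact_mod_cast (by omega : 1 ≤ p)
  obtain ⟨l, rfl⟩ : ∃ l, k = l + 1 := ⟨k-1, by omega⟩
  set M := p^l with hM
  have hM1 : 1 ≤ M := Nat.one_le_pow _ _ (by omega)
  have hN : p^(l+1) = p * M := by rw [pow_succ, mul_comm]
  have hA : (((p:ℝ)+1)/3)^(p^(l+1)*(p-1)) ≤ (p:ℝ)^((p^(l+1)-1)*(p-2)) := by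
    rw [hN, mul_assoc, pow_mul]
    calc _ ≤ ((p:ℝ)^(p-2))^(M*(p-1)) := by gcongr; exact em_num1 p hp
      _ = (p:ℝ)^((p-2)*(M*(p-1))) := by rw [← pow_mul]
      _ ≤ _ := by
        refine pow_le_pow_right₀ hp1 ?_
        rw [mul_comm (p*M-1)]
        refine Nat.mul_le_mul_left _ ?_
        rw [Nat.mul_sub, mul_comm M p]
        omega
  have hB : (p:ℝ)^(p^(l+1)*((p-1)*(l+1+1)-1)) = p^(p-2) * ((p^(l+1):ℝ)^(p^(l+1)*(p-1)) * (p:ℝ)^((p^(l+1)-1)*(p-2))) := by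
    rw [← pow_mul, ← pow_add, ← pow_add]
    congr 1
    obtain ⟨s, rfl⟩ : ∃ s, p = s + 2 := ⟨p-2, by omega⟩
    have : 1 ≤ (s+2)^(l+1) := Nat.one_le_pow _ _ (by omega)
    obtain ⟨T, hT⟩ : ∃ T, (s+2)^(l+1) = T + 1 := ⟨(s+2)^(l+1)-1, by omega⟩
    rw [hT]
    have e : (s+2-1)*(l+1+1)-1 = (s+1)*(l+1) + s := by
      have : (s+2-1)*(l+1+1) = (s+1)*(l+1) + s + 1 := by
        rw [show s+2-1 = s+1 by omega]; ring
      omega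
    rw [e]
    simp only [Nat.add_sub_cancel, show s+2-1 = s+1 by omega]
    ring
  rw [hB] at hD
  have hC : (p:ℝ)^(m-1) ≤ p^(p-2) := pow_le_pow_right₀ hp1 (by omega)
  have hE : (p:ℝ)^(p-2) * ((p^(l+1):ℝ)^(p^(l+1)*(p-1)) * (p:ℝ)^((p^(l+1)-1)*(p-2))) ≤ p^(p-2) * D :=
    hD.trans (by gcongr)
  have hF := le_of_mul_le_mul_left hE (by positivity)
  refine le_trans ?_ hF
  rw [mul_div_assoc, mul_pow]
  gcongr

lemma em_rhs {L : Type*} [Field L] [NumberField L]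
    {K : Type*} [Field K] [NumberField K] [Algebra K L] {T : ℕ} (hfr : Module.finrank ℚ L = T) :
    ((2:ℝ)⁻¹ ^ (Module.finrank ℚ K) * Real.sqrt |(discr K : ℝ)|) ^ (2 * Module.finrank K L)
     = (4:ℝ)⁻¹ ^ T * ((discr K).natAbs:ℝ)^(Module.finrank K L) := by
  have hnm := Module.finrank_mul_finrank ℚ K L
  rw [hfr] at hnm
  rw [← hnm, pow_mul, mul_pow, Real.sq_sqrt (abs_nonneg _), mul_pow, ← pow_mul, ← pow_mul, Nat.cast_natAbs]
  rw [show Module.finrank ℚ K * (2 * Module.finrank K L) = 2 * (Module.finrank ℚ K * Module.finrank K L) by ring,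
    pow_mul _ 2]
  norm_num

section
variable {p k : ℕ} {L : Type*} [Field L] [NumberField L]
  {ζ : L} [IsCyclotomicExtension {p^(k+1)} ℚ L]
  {K : Type*} [Field K] [NumberField K] [Algebra K L]

lemma em_nz {q : ℕ} (hq : 0 < q) (hζ : IsPrimitiveRoot ζ q) : |Algebra.norm ℚ ζ| = 1 := by
  have : (Algebra.norm ℚ ζ)^q = 1 := by rw [← map_pow, hζ.pow_eq_one, map_one]
  have h2 : |Algebra.norm ℚ ζ|^q = 1 := by rw [← abs_pow, this, abs_one]
  exact (pow_eq_one_iff_of_nonneg (abs_nonneg _) hq.ne').mp h2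

lemma em_odd1 (hp : p.Prime) (hp3 : 3 ≤ p) (hk : 1 ≤ k) (hζ : IsPrimitiveRoot ζ (p^(k+1)))
    (hno : ¬ ∀ x : K, algebraMap K L x ∈ IntermediateField.adjoin ℚ {ζ ^ p})
    (σ : L ≃ₐ[K] L) (h : ℕ) (hh : σ ζ = ζ ^ h) (h1 : 1 ≡ h [MOD p]) (h0 : 1 ≤ h) : σ = 1 := by
  obtain ⟨u, hu⟩ := (Nat.modEq_iff_dvd' h0).mp h1
  exact em_B hp hk hζ hno k 1 u σ (by omega) le_rfl (by omega) (by rw [hh]; congr 1; rw [pow_one]; omega)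

lemma em_odd2 (hp : p.Prime) (hp3 : 3 ≤ p) (hk : 1 ≤ k) (hζ : IsPrimitiveRoot ζ (p^(k+1)))
    (hno : ¬ ∀ x : K, algebraMap K L x ∈ IntermediateField.adjoin ℚ {ζ ^ p})
    (σ : L ≃ₐ[K] L) (hσ : σ ≠ 1) : |Algebra.norm ℚ (ζ - σ ζ)| = p := by
  have : NeZero (p^(k+1)) := ⟨(pow_pos hp.pos _).ne'⟩
  have : Fact p.Prime := ⟨hp⟩
  have hpos := pow_pos hp.pos (k+1)
  have hq1 : 1 < p^(k+1) := Nat.one_lt_pow (by omega) hp.one_lt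
  obtain ⟨h, hh, h0⟩ : ∃ h, σ ζ = ζ ^ h ∧ 1 ≤ h := by
    obtain ⟨i, -, hi⟩ := hζ.eq_pow_of_pow_eq_one (ξ := σ ζ) (by rw [← map_pow, hζ.pow_eq_one, map_one])
    exact ⟨i + p^(k+1), by rw [pow_add, hζ.pow_eq_one, mul_one, hi], by omega⟩
  have hc : (h-1).Coprime (p^(k+1)) := by
    apply Nat.Coprime.pow_right
    rw [Nat.coprime_comm, hp.coprime_iff_not_dvd]
    intro hd
    exact hσ (em_odd1 hp hp3 hk hζ hno σ h hh ((Nat.modEq_iff_dvd' h0).mpr hd) h0)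
  have hprim := hζ.pow_of_coprime _ hc
  have hn := hprim.norm_pow_sub_one_eq_prime_pow_of_ne_zero (K := ℚ) (L := L) (s := 0)
    (Polynomial.cyclotomic.irreducible_rat hpos) (by omega) (by omega)
  have e : ζ - σ ζ = - (ζ * ((ζ^(h-1))^p^0 - 1)) := by
    rw [hh]
    obtain ⟨l, rfl⟩ : ∃ l, h = l + 1 := ⟨h-1, by omega⟩
    simp; ring
  rw [e, ← neg_one_mul, map_mul, map_mul, hn, abs_mul, abs_mul, em_nz hpos hζ]
  have : |Algebra.norm ℚ (-1:L)| = 1 := by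
    rw [show (-1:L) = algebraMap ℚ L (-1) by simp, Algebra.norm_algebraMap]; simp
  rw [this]; simp

lemma em_odd3 (hp : p.Prime) (hp3 : 3 ≤ p) (hk : 1 ≤ k) (hζ : IsPrimitiveRoot ζ (p^(k+1)))
    (hno : ¬ ∀ x : K, algebraMap K L x ∈ IntermediateField.adjoin ℚ {ζ ^ p}) :
    Nat.card (L ≃ₐ[K] L) ≤ p - 1 := by
  have : NeZero (p^(k+1)) := ⟨(pow_pos hp.pos _).ne'⟩
  have : Fact p.Prime := ⟨hp⟩
  have hd : p ∣ p^(k+1) := dvd_pow_self _ (by omega)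
  let f : (L ≃ₐ[K] L) →* (ZMod p)ˣ := (ZMod.unitsMap hd).comp (hζ.autToPow K)
  have hf : Function.Injective f := by
    rw [injective_iff_map_eq_one]
    intro σ hσ
    have h1 := congrArg (Units.val) hσ
    simp only [f, MonoidHom.comp_apply, ZMod.unitsMap_val, Units.val_one] at h1
    set a := ((hζ.autToPow K σ : (ZMod (p^(k+1)))ˣ) : ZMod (p^(k+1))) with ha
    have h2 : ((a.val : ℕ) : ZMod p) = ((1:ℕ) : ZMod p) := by
      rw [ZMod.natCast_val, h1]; simp
    rw [ZMod.natCast_eq_natCast_iff] at h2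
    refine em_odd1 hp hp3 hk hζ hno σ a.val (hζ.autToPow_spec K σ).symm h2.symm ?_
    by_contra h3
    have h4 : a.val = 0 := by omega
    rw [h4] at h2
    have := (Nat.modEq_iff_dvd' (by omega : 0 ≤ 1)).mp h2
    exact hp.one_lt.ne' (Nat.dvd_one.mp this)
  calc _ ≤ Nat.card (ZMod p)ˣ := Nat.card_le_card_of_injective f hf
    _ = p - 1 := by rw [Nat.card_eq_fintype_card, ZMod.card_units]

lemma em_oddmain (hp : p.Prime) (hp3 : 3 ≤ p) (hk : 1 ≤ k) (hζ : IsPrimitiveRoot ζ (p^(k+1)))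
    (hno : ¬ ∀ x : K, algebraMap K L x ∈ IntermediateField.adjoin ℚ {ζ ^ p}) (x : K) :
    ∃ c : 𝓞 K, ((Algebra.norm ℚ (x - (c : K)) : ℚ) : ℝ) ^ (2 * Module.finrank K L) ≤
      ((2:ℝ)⁻¹ ^ (Module.finrank ℚ K) * Real.sqrt |(discr K : ℝ)|) ^ (2 * Module.finrank K L) := by
  classical
  have : NeZero (p^(k+1)) := ⟨(pow_pos hp.pos _).ne'⟩
  have : Fact p.Prime := ⟨hp⟩
  have hpos := pow_pos hp.pos (k+1)
  have hfr : Module.finrank ℚ L = p^k * (p-1) := by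
    rw [IsCyclotomicExtension.finrank (n := p^(k+1)) L (Polynomial.cyclotomic.irreducible_rat hpos),
      Nat.totient_prime_pow_succ hp]
  have : IsGalois ℚ L := IsCyclotomicExtension.isGalois {p^(k+1)} ℚ L
  have : IsGalois K L := IsGalois.tower_top_of_isGalois ℚ K L
  have hcard := IsGalois.card_aut_eq_finrank K L
  have hm := em_odd3 hp hp3 hk hζ hno
  rw [hcard] at hm
  obtain ⟨c, hc⟩ := em_odd (p := p) (N := p^k) (by ring) hp (pow_pos hp.pos k) hζ hfr x
  refine ⟨c, hc.trans ?_⟩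
  have hd := em_discr hζ K
  rw [Finset.abs_prod, Finset.prod_congr rfl (fun σ hσ => em_odd2 hp hp3 hk hζ hno σ (Finset.mem_erase.mp hσ).1),
    Finset.prod_const, Finset.card_erase_of_mem (Finset.mem_univ _), Finset.card_univ, ← Nat.card_eq_fintype_card,
    hcard, IsCyclotomicExtension.Rat.discr_prime_pow_succ p k L] at hd
  have hd' : (p:ℝ)^(p^k*((p-1)*(k+1)-1)) ≤ p^(Module.finrank K L-1) * ((discr K).natAbs:ℝ)^(Module.finrank K L) := by
    rw [Int.natAbs_mul, Int.natAbs_pow, Int.natAbs_pow] at hd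
    simp only [Int.natAbs_neg, Int.natAbs_one, one_pow, one_mul, Int.natAbs_natCast] at hd
    exact_mod_cast hd
  have h2 := em_num2 p k _ hp3 hk hm _ (by positivity) hd'
  have e := em_rhs (K := K) (L := L) hfr
  rw [e, show ((p^k:ℕ):ℝ)*(p+1)/12 = 4⁻¹ * ((p^k:ℝ)*(p+1)/3) by push_cast; ring, mul_pow]
  gcongr
end

section
variable {k : ℕ} {L : Type*} [Field L] [NumberField L]
  {ζ : L} [IsCyclotomicExtension {2^(k+1)} ℚ L]
  {K : Type*} [Field K] [NumberField K] [Algebra K L]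

lemma em_conj {q : ℕ} [NeZero q] {L : Type*} [Field L] [NumberField L]
    [IsCyclotomicExtension {q} ℚ L]
    {K : Type*} [Field K] [NumberField K] [Algebra K L]
    (htr : ∀ φ : K →+* ℂ, ∀ x : K, (φ x).im = 0) :
    ∃ σ : L ≃ₐ[K] L, σ (IsCyclotomicExtension.zeta q ℚ L) = (IsCyclotomicExtension.zeta q ℚ L)⁻¹ := by
  have hζ := IsCyclotomicExtension.zeta_spec q ℚ L
  set ζ := IsCyclotomicExtension.zeta q ℚ L with hz
  have hirr := Polynomial.cyclotomic.irreducible_rat (NeZero.pos q)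
  let s := IsCyclotomicExtension.fromZetaAut (n := q) (K := ℚ) hζ.inv hirr
  have hs : s ζ = ζ⁻¹ := IsCyclotomicExtension.fromZetaAut_spec hζ.inv hirr
  let ψ : L →ₐ[ℚ] ℂ := (Classical.arbitrary (L →+* ℂ)).toRatAlgHom
  have hc : ψ.comp s.toAlgHom = ((Complex.conjAe.restrictScalars ℚ).toAlgHom).comp ψ := by
    refine (hζ.powerBasis ℚ).algHom_ext ?_
    have hn : ‖ψ ζ‖ = 1 := (hζ.map_of_injective (f := ψ) ψ.injective).norm'_eq_one (NeZero.ne q)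
    simp [hs, Complex.inv_eq_conj hn]
  have hfix : ∀ x : K, s (algebraMap K L x) = algebraMap K L x := by
    intro x
    apply ψ.injective
    have h1 := DFunLike.congr_fun hc (algebraMap K L x)
    have h2 := htr (ψ.toRingHom.comp (algebraMap K L)) x
    have h3 : ψ (s (algebraMap K L x)) = (starRingEnd ℂ) (ψ (algebraMap K L x)) := by simpa using h1
    change ψ (s (algebraMap K L x)) = ψ (algebraMap K L x)
    rw [h3]
    exact Complex.conj_eq_iff_im.mpr h2
  exact ⟨AlgEquiv.ofRingEquiv (f := s.toRingEquiv) hfix, hs⟩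

lemma em_two1 (hk : 1 ≤ k) (hζ : IsPrimitiveRoot ζ (2^(k+1)))
    (hno : ¬ ∀ x : K, algebraMap K L x ∈ IntermediateField.adjoin ℚ {ζ ^ 2})
    (σ : L ≃ₐ[K] L) (hσ : σ ζ = ζ⁻¹) : σ ≠ 1 ∧ ∀ τ : L ≃ₐ[K] L, τ = 1 ∨ τ = σ := by
  have hpos : 0 < 2^(k+1) := by positivity
  have h4 : 4 ∣ 2^(k+1) := by
    rw [show (4:ℕ) = 2^2 by norm_num]; exact pow_dvd_pow _ (by omega)
  have h4' : 4 ≤ 2^(k+1) := Nat.le_of_dvd hpos h4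
  have hz0 : ζ ≠ 0 := hζ.ne_zero hpos.ne'
  have key : ∀ (τ : L ≃ₐ[K] L) (h : ℕ), τ ζ = ζ^h → h % 4 = 1 → τ = 1 := by
    intro τ h hh h1
    exact em_B Nat.prime_two hk hζ hno k 2 (h/4) τ (by omega) (by omega) (by omega)
      (by rw [hh]; congr 1; omega)
  have hinv : ζ⁻¹ = ζ^(2^(k+1)-1) := by
    apply inv_eq_of_mul_eq_one_right
    rw [← pow_succ', Nat.sub_add_cancel hpos, hζ.pow_eq_one]
  have hσσ : σ * σ = 1 := em_ext hζ _ _ (by simp [hσ])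
  constructor
  · rintro rfl
    simp only [AlgEquiv.one_apply] at hσ
    have : ζ^2 = 1 := by rw [sq]; nth_rewrite 1 [hσ]; exact inv_mul_cancel₀ hz0
    have := Nat.le_of_dvd (by norm_num) (hζ.dvd_of_pow_eq_one 2 this)
    omega
  · intro τ
    have hτ : IsPrimitiveRoot (τ ζ) (2^(k+1)) := hζ.map_of_injective τ.injective
    have : NeZero (2^(k+1)) := ⟨hpos.ne'⟩
    obtain ⟨i, hi, hc, hh⟩ := hζ.isPrimitiveRoot_iff.mp hτ
    have hodd : i % 2 = 1 := by
      have := Nat.Coprime.coprime_dvd_right (dvd_pow_self 2 (by omega : k+1 ≠ 0)) hc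
      exact Nat.odd_iff.mp (Nat.coprime_two_right.mp this)
    by_cases h1 : i % 4 = 1
    · exact Or.inl (key τ i hh.symm h1)
    · right
      have h3 : i % 4 = 3 := by omega
      have := key (σ * τ) ((2^(k+1)-1)*i) (by
        rw [AlgEquiv.mul_apply, ← hh, map_pow, hσ, hinv, ← pow_mul]) (by
        rw [Nat.mul_mod, h3]; omega)
      calc τ = σ * σ * τ := by rw [hσσ, one_mul]
        _ = σ := by rw [mul_assoc, this, mul_one]

lemma em_two_c (hk : 1 ≤ k) (hζ : IsPrimitiveRoot ζ (2^(k+1))) (c : ZMod (2^(k+1)) → ℤ)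
    (hc : ∀ j, c (1 - j) = c j) :
    ∃ v : L, IsIntegral ℤ v ∧ ∑ j, (c j : L) * ζ^j.val = (1 + ζ) * v := by
  have : NeZero (2^(k+1)) := ⟨by positivity⟩
  let Z : 𝓞 L := ⟨ζ, hζ.isIntegral (NeZero.pos _)⟩
  have hS : ∑ j : ZMod (2^(k+1)), c j * (-1:ℤ)^j.val = 0 := by
    have h1 : ∑ j : ZMod (2^(k+1)), c j * (-1:ℤ)^j.val = ∑ j : ZMod (2^(k+1)), - (c j * (-1:ℤ)^j.val) := by
      refine Fintype.sum_equiv (Equiv.subLeft 1) _ _ fun j => ?_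
      rw [Equiv.subLeft_apply, hc]
      have h2 : ((1-j).val + j.val) ≡ 1 [MOD 2^(k+1)] := by
        rw [← ZMod.natCast_eq_natCast_iff]; simp
      have h3 := h2.of_dvd (dvd_pow_self 2 (by omega : k+1 ≠ 0))
      have h4 : ((1-j).val + j.val) % 2 = 1 := h3
      rcases Nat.even_or_odd j.val with h | h
      · have h5 : Odd (1-j).val := by rw [Nat.odd_iff]; rw [Nat.even_iff] at h; omega
        rw [h.neg_one_pow, h5.neg_one_pow]; ring
      · have h5 : Even (1-j).val := by rw [Nat.even_iff]; rw [Nat.odd_iff] at h; omega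
        rw [h.neg_one_pow, h5.neg_one_pow]; ring
    rw [Finset.sum_neg_distrib] at h1
    omega
  have hd : (1 + Z) ∣ ∑ j : ZMod (2^(k+1)), (c j : 𝓞 L) * Z^j.val := by
    have e : ∑ j : ZMod (2^(k+1)), (c j : 𝓞 L) * Z^j.val
        = ∑ j : ZMod (2^(k+1)), (c j : 𝓞 L) * (Z^j.val - (-1)^j.val) := by
      have h0 : ∑ j : ZMod (2^(k+1)), (c j : 𝓞 L) * (-1)^j.val = 0 := by exact_mod_cast congrArg (Int.cast : ℤ → 𝓞 L) hS
      simp only [mul_sub, Finset.sum_sub_distrib]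
      rw [h0, sub_zero]
    rw [e]
    refine Finset.dvd_sum fun j _ => Dvd.dvd.mul_left ?_ _
    have := sub_dvd_pow_sub_pow Z (-1) j.val
    rwa [sub_neg_eq_add, add_comm] at this
  obtain ⟨V, hV⟩ := hd
  refine ⟨V, V.2, ?_⟩
  have := congrArg (algebraMap (𝓞 L) L) hV
  have hZ : algebraMap (𝓞 L) L Z = ζ := rfl
  rw [map_sum, map_mul, map_add, map_one, hZ] at this
  rw [← this]
  refine Finset.sum_congr rfl fun j _ => ?_
  rw [map_mul, map_pow, hZ, map_intCast]

lemma em_twomain (hk : 1 ≤ k) (hζ : IsPrimitiveRoot ζ (2^(k+1)))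
    (hno : ¬ ∀ x : K, algebraMap K L x ∈ IntermediateField.adjoin ℚ {ζ ^ 2})
    (σ : L ≃ₐ[K] L) (hσ : σ ζ = ζ⁻¹) (x : K) :
    ∃ c : 𝓞 K, ((Algebra.norm ℚ (x - (c : K)) : ℚ) : ℝ) ^ (2 * Module.finrank K L) ≤
      ((2:ℝ)⁻¹ ^ (Module.finrank ℚ K) * Real.sqrt |(discr K : ℝ)|) ^ (2 * Module.finrank K L) := by
  classical
  have hpos : 0 < 2^(k+1) := by positivity
  have : NeZero (2^(k+1)) := ⟨hpos.ne'⟩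
  have : Fact (Nat.Prime 2) := ⟨Nat.prime_two⟩
  have hz0 : ζ ≠ 0 := hζ.ne_zero hpos.ne'
  have hirr := Polynomial.cyclotomic.irreducible_rat hpos
  have hfr : Module.finrank ℚ L = 2^k * (2-1) := by
    rw [IsCyclotomicExtension.finrank (n := 2^(k+1)) L hirr, Nat.totient_prime_pow_succ Nat.prime_two]
  have : IsGalois ℚ L := IsCyclotomicExtension.isGalois {2^(k+1)} ℚ L
  have : IsGalois K L := IsGalois.tower_top_of_isGalois ℚ K L
  have hcard := IsGalois.card_aut_eq_finrank K L
  obtain ⟨hσ1, hall⟩ := em_two1 hk hζ hno σ hσ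
  have huniv : (Finset.univ : Finset (L ≃ₐ[K] L)) = {1, σ} := by
    ext τ; simpa using hall τ
  have hm : Module.finrank K L = 2 := by
    rw [← hcard, Nat.card_eq_fintype_card, ← Finset.card_univ, huniv, Finset.card_pair hσ1.symm]
  have her : (Finset.univ : Finset (L ≃ₐ[K] L)).erase 1 = {σ} := by
    rw [huniv]; ext τ; simp only [Finset.mem_erase, Finset.mem_insert, Finset.mem_singleton]
    constructor
    · tauto
    · rintro rfl; exact ⟨hσ1, Or.inr rfl⟩
  have hn1 := hζ.norm_pow_sub_one_eq_prime_pow_of_ne_zero (K := ℚ) (L := L) (s := 1) hirr hk (by omega)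
  have hn0 := hζ.norm_pow_sub_one_eq_prime_pow_of_ne_zero (K := ℚ) (L := L) (s := 0) hirr (by omega) (by omega)
  norm_num at hn1 hn0
  have hnp : Algebra.norm ℚ (1 + ζ) = 2 := by
    have : ζ^2 - 1 = (ζ - 1) * (1 + ζ) := by ring
    rw [this, map_mul, hn0] at hn1
    linarith
  have hnd : |Algebra.norm ℚ (ζ - σ ζ)| = 4 := by
    have e : (ζ - σ ζ) * ζ = ζ^2 - 1 := by rw [hσ]; field_simp
    have := congrArg (fun y => |Algebra.norm ℚ y|) e
    simp only [map_mul, abs_mul, em_nz hpos hζ, hn1] at this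
    simpa using this
  have hd := em_discr hζ K
  rw [her, Finset.prod_singleton, hnd, IsCyclotomicExtension.Rat.discr_prime_pow_succ 2 k L, hm] at hd
  have hd' : ((2:ℝ)^k)^(2^k) ≤ 4 * ((discr K).natAbs:ℝ)^2 := by
    rw [Int.natAbs_mul, Int.natAbs_pow, Int.natAbs_pow] at hd
    simp only [Int.natAbs_neg, Int.natAbs_one, one_pow, one_mul, Int.natAbs_natCast] at hd
    rw [show 2^k * ((2-1)*(k+1)-1) = k * 2^k by simp [mul_comm], pow_mul] at hd
    exact_mod_cast hd
  have hz1 : (1 + ζ) ≠ 0 := by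
    intro h; rw [h, Algebra.norm_zero] at hnp; norm_num at hnp
  -- the representation
  have hflip : ∀ j : ZMod (2^(k+1)), ζ^((1-j).val) = ζ * (ζ^j.val)⁻¹ := by
    intro j
    rw [eq_mul_inv_iff_mul_eq₀ (pow_ne_zero _ hz0), ← em_zadd hζ]
    have := em_zv hζ 1
    simpa using this
  have hσs : ∀ a : ZMod (2^(k+1)) → ℚ, σ (∑ j, algebraMap ℚ L (a j) * ζ^j.val) =
      ζ⁻¹ * ∑ j, algebraMap ℚ L (a (1 - j)) * ζ^j.val := by
    intro a
    rw [map_sum, Finset.mul_sum]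
    refine Fintype.sum_equiv (Equiv.subLeft 1) _ _ fun j => ?_
    rw [Equiv.subLeft_apply, hflip, map_mul, map_pow, hσ, sub_sub_cancel]
    have : σ (algebraMap ℚ L (a j)) = algebraMap ℚ L (a j) := by simp
    rw [this, inv_pow]
    field_simp
  set y : L := (1 + ζ) * algebraMap K L x with hy
  have hσy : y = ζ * σ y := by
    rw [hy, map_mul, AlgEquiv.commutes, map_add, map_one, hσ]
    field_simp
    ring
  obtain ⟨b0, hb0⟩ := em_rep hζ y
  let b : ZMod (2^(k+1)) → ℚ := fun j => (b0 j + b0 (1-j))/2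
  have hbs : ∀ j, b (1-j) = b j := by intro j; simp only [b, sub_sub_cancel]; ring
  have hb : y = ∑ j, algebraMap ℚ L (b j) * ζ^j.val := by
    have h1 : y = ∑ j, algebraMap ℚ L (b0 (1-j)) * ζ^j.val := by
      rw [hσy, hb0, hσs, ← mul_assoc, mul_inv_cancel₀ hz0, one_mul]
    have h2 : y = (y + y)/2 := by ring
    rw [h2]
    nth_rewrite 1 [hb0]
    rw [h1, ← Finset.sum_add_distrib, Finset.sum_div]
    refine Finset.sum_congr rfl fun j _ => ?_
    simp only [b, map_div₀, map_add]
    simp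
    ring
  obtain ⟨t, ht⟩ := em_norm 2 (2^k) (2^(k+1)) (by ring) Nat.prime_two (by positivity) L ζ hζ hfr b
  let cc : ZMod (2^(k+1)) → ℤ := fun j => round ((b j:ℝ)+t)
  have hcc : ∀ j, cc (1-j) = cc j := by intro j; simp only [cc, hbs]
  obtain ⟨v, hvi, hv⟩ := em_two_c hk hζ cc hcc
  have hw : ∑ j, (cc j : L) * ζ^j.val = ∑ j, algebraMap ℚ L ((fun j => (cc j : ℚ)) j) * ζ^j.val := by
    simp
  have hσv : σ v = v := by
    have h1 := hσs (fun j => (cc j : ℚ))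
    simp only [hcc] at h1
    rw [← hw, hv, map_mul, map_add, map_one, hσ] at h1
    have h2 : (1 + ζ) * σ v = (1 + ζ) * v := by
      calc (1 + ζ) * σ v = ζ * ((1 + ζ⁻¹) * σ v) := by field_simp; ring
        _ = _ := by rw [h1]; field_simp
    exact mul_left_cancel₀ hz1 h2
  obtain ⟨c, hc⟩ := em_fixed hζ (K := K) v hvi (fun τ => by
    rcases hall τ with h | h
    · rw [h]; rfl
    · rw [h, hσv])
  refine ⟨c, ?_⟩
  have e1 : ∑ j, algebraMap ℚ L (b j - round ((b j:ℝ)+t)) * ζ^j.val = (1 + ζ) * algebraMap K L (x - (c:K)) := by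
    rw [map_sub, hc, mul_sub, ← hy, ← hv, hb, ← Finset.sum_sub_distrib]
    refine Finset.sum_congr rfl fun j _ => ?_
    simp [sub_mul, cc]
  rw [e1, map_mul, hnp, em_normpow, hm] at ht
  rw [em_rhs (K := K) (L := L) hfr, hm]
  norm_num at ht ⊢
  set Y : ℝ := ((Algebra.norm ℚ (x - (c : K)) : ℚ) : ℝ)
  have e2 : ((2:ℝ)^k * (2+1)/12)^(2^k) = (4:ℝ)⁻¹^(2^k) * ((2:ℝ)^k)^(2^k) := by
    rw [← mul_pow]; congr 1; ring
  have h4 : (0:ℝ) < (4:ℝ)⁻¹^(2^k) := by positivity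
  have h5 := mul_le_mul_of_nonneg_left hd' h4.le
  have e3 : (((discr K).natAbs : ℕ) : ℝ)^2 = (discr K : ℝ)^2 := by
    rw [Nat.cast_natAbs, Int.cast_abs, sq_abs]
  rw [e3] at h5
  rw [one_div]
  set Q : ℝ := (4:ℝ)⁻¹^(2^k)
  have h6 : (2 * Y^2)^2 ≤ Q * (4 * (discr K : ℝ)^2) := by
    refine ht.trans (le_trans (le_of_eq ?_) h5)
    rw [← e2]; norm_num
  nlinarith
end

lemma em_cyc (q : ℕ) [NeZero q] : IsCyclotomicExtension {q} ℚ (CyclotomicField q ℚ) := by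
  have h : (CyclotomicField.algebra q ℚ) =
    (DivisionRing.toRatAlgebra : Algebra ℚ (CyclotomicField q ℚ)) := Subsingleton.elim _ _
  have := CyclotomicField.isCyclotomicExtension q ℚ
  rw [h] at this
  exact this

lemma em_hno {p k : ℕ} (hp : p.Prime) {L : Type*} [Field L] [NumberField L]
    {ζ : L} (hζ : IsPrimitiveRoot ζ (p^(k+1)))
    {K : Type*} [Field K] [NumberField K] [Algebra K L]
    (hmin : ∀ m : ℕ+, Nonempty (K →ₐ[ℚ] CyclotomicField m ℚ) → p^(k+1) ≤ (m : ℕ)) :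
    ¬ ∀ x : K, algebraMap K L x ∈ IntermediateField.adjoin ℚ {ζ ^ p} := by
  intro hall
  have hpos : 0 < p^k := pow_pos hp.pos k
  have : NeZero (p^k) := ⟨hpos.ne'⟩
  have hprim : IsPrimitiveRoot (ζ^p) (p^k) := hζ.pow (pow_pos hp.pos _) (by ring)
  have hc1 := hprim.intermediateField_adjoin_isCyclotomicExtension ℚ
  have hc2 := em_cyc (p^k)
  let f : K →+* IntermediateField.adjoin ℚ {ζ ^ p} :=
    (algebraMap K L).codRestrict (IntermediateField.adjoin ℚ {ζ ^ p}).toSubfield hall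
  let e := @IsCyclotomicExtension.algEquiv {p^k} ℚ (IntermediateField.adjoin ℚ {ζ ^ p}) _ _ _ hc1 (CyclotomicField (p^k) ℚ)
    _ _ hc2
  have h := hmin ⟨p^k, hpos⟩ ⟨(e.toRingEquiv.toRingHom.comp f).toRatAlgHom⟩
  have h2 : p^k < p^(k+1) := Nat.pow_lt_pow_right hp.one_lt (by omega)
  simp only [PNat.mk_coe] at h
  omega

lemma em_final (p k : ℕ) (hp : p.Prime) (hk : 1 ≤ k)
    (K : Type*) [Field K] [NumberField K]
    (htr : ∀ φ : K →+* ℂ, ∀ x : K, (φ x).im = 0)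
    (L : Type*) [Field L] [NumberField L] [NeZero (p^(k+1))] [IsCyclotomicExtension {p^(k+1)} ℚ L] [Algebra K L]
    (hmin : ∀ m : ℕ+, Nonempty (K →ₐ[ℚ] CyclotomicField m ℚ) → p^(k+1) ≤ (m : ℕ)) :
    euclideanMinimum K ≤
      (2 : ℝ)⁻¹ ^ (Module.finrank ℚ K) * Real.sqrt |(NumberField.discr K : ℝ)| := by
  have hζ := IsCyclotomicExtension.zeta_spec (p^(k+1)) ℚ L
  have hno := em_hno (K := K) hp hζ hmin
  have main : ∀ x : K, ∃ c : 𝓞 K, ((Algebra.norm ℚ (x - (c : K)) : ℚ) : ℝ) ^ (2 * Module.finrank K L) ≤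
      ((2:ℝ)⁻¹ ^ (Module.finrank ℚ K) * Real.sqrt |(discr K : ℝ)|) ^ (2 * Module.finrank K L) := by
    intro x
    by_cases h2 : p = 2
    · subst h2
      obtain ⟨σ, hσ⟩ := em_conj (q := 2^(k+1)) (L := L) htr
      exact em_twomain hk hζ hno σ hσ x
    · have := hp.two_le
      exact em_oddmain hp (by omega) hk hζ hno x
  have hm : Module.finrank K L ≠ 0 := (Module.finrank_pos (R := K) (M := L)).ne'
  unfold euclideanMinimum
  refine ciSup_le fun x => ?_
  obtain ⟨c, hc⟩ := main x
  refine (ciInf_le ⟨0, ?_⟩ c).trans ?_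
  · rintro _ ⟨c, rfl⟩; exact abs_nonneg _
  · rw [pow_mul, ← sq_abs, ← pow_mul] at hc
    exact le_of_pow_le_pow_left₀ (by omega) (by positivity) hc

theorem euclideanMinimum_le_of_totallyReal_primePower_conductor
    (p r : ℕ) (hp : p.Prime) (hr : 2 ≤ r)
    (K : Type*) [Field K] [NumberField K]
    (htr : ∀ φ : K →+* ℂ, ∀ x : K, (φ x).im = 0)
    (hcond : HasConductor K ⟨p ^ r, pow_pos hp.pos r⟩) :
    euclideanMinimum K ≤
      (2 : ℝ)⁻¹ ^ (Module.finrank ℚ K) * Real.sqrt |(NumberField.discr K : ℝ)| := by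
  obtain ⟨k, rfl⟩ : ∃ k, r = k + 1 := ⟨r - 1, by omega⟩
  have hk : 1 ≤ k := by omega
  have hne : NeZero (p^(k+1)) := ⟨(pow_pos hp.pos _).ne'⟩
  obtain ⟨⟨φ⟩, hmin⟩ := hcond
  have hc := em_cyc (p^(k+1))
  let : Algebra K (CyclotomicField (p^(k+1)) ℚ) := φ.toRingHom.toAlgebra
  exact em_final p k hp hk K htr (CyclotomicField (p^(k+1)) ℚ) (fun m hm => by
    have := hmin m hm
    exact_mod_cast this)
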